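/- Let T > 0, c > 0, b ≤ 0, ρ ∈ (−1, 0], a > 0, and let r > 0 satisfy r·cos r = (b + ρc·p⁺(r))·T·sin r, where p⁺(r) = (1/(2(1 − ρ²)))·[(1 + 2ρb/c) + √((1 + 2ρb/c)² + 4(1 − ρ²)·(b²/c² + r²/(c²T²)))]. Set p = p⁺(r), b̃ = b + ρcp, χ = r/T, and assume D := (c²(2p − 1) − 2ρc·b̃)·(2r − sin(2r)) + 2ρc·(r/T)·(1 − cos(2r)) > 0; let q₀ ∈ ℝ satisfy q₀² = 8r³a/(c²T³·D). Then the functions z(t) = (q₀c²/χ)·sin(χt), q(t) = q₀·(cos(χt) − (b̃/χ)·sin(χt)) and y(t) = (q₀²c²/(8χ³))·[(c²(2p − 1) − 2ρc·b̃)·(2χt − sin(2χt)) + 2ρc·χ·(1 − cos(2χt))] satisfy the correlated Stein–Stein Hamiltonian system y' = z²(p − 1/2) + ρczq, z' = b̃z + c²q, q' = pz(1 − p) − b̃q on [0,T], together with the boundary conditions y(0) = z(0) = 0, q(0) = q₀, y(T) = a and q(T) = 0. -/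

import Mathlib

/-- The unique positive root `p⁺(r)` of the quadratic
`c²p(p−1) − (b + ρcp)² = r²/T²` in the correlated Stein–Stein model. -/
noncomputable def pPlus (b c T ρ r : ℝ) : ℝ :=
  (1 / (2 * (1 - ρ ^ 2))) * ((1 + 2 * ρ * b / c)
    + Real.sqrt ((1 + 2 * ρ * b / c) ^ 2
        + 4 * (1 - ρ ^ 2) * (b ^ 2 / c ^ 2 + r ^ 2 / (c ^ 2 * T ^ 2))))

/-! For constant `p` the pair `(z, q)` solves a linear system with trace-free matrix
`!![b̃, c²; p (1 - p), -b̃]`, whose determinant is `c² p (p - 1) - b̃²`. The quadratic solved by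
`p⁺(r)` makes this determinant equal to `χ² = (r / T)²`, so `z` and `q` oscillate with
frequency `χ`. The right-hand side of the `y`-equation is then a trigonometric polynomial in
`2 χ t`, integrated explicitly. Finally `q(T) = 0` is the transversality equation at `χ T = r`,
and the prescribed value of `q₀²` normalizes `y(T)` to `a`. -/

theorem pPlus_quadratic {b c T ρ r : ℝ} (hc : c ≠ 0) (hρ : |ρ| < 1) :
    c ^ 2 * pPlus b c T ρ r * (pPlus b c T ρ r - 1) - (b + ρ * c * pPlus b c T ρ r) ^ 2
      = r ^ 2 / T ^ 2 := by
  have hlead : 0 < 1 - ρ ^ 2 := sub_pos.2 ((sq_lt_one_iff_abs_lt_one ρ).2 hρ)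
  set B := 1 + 2 * ρ * b / c with hB
  set N := b ^ 2 / c ^ 2 + r ^ 2 / (c ^ 2 * T ^ 2) with hN
  have hdiscrim : discrim (1 - ρ ^ 2) (-B) (-N)
      = √(B ^ 2 + 4 * (1 - ρ ^ 2) * N) * √(B ^ 2 + 4 * (1 - ρ ^ 2) * N) := by
    rw [Real.mul_self_sqrt (by positivity), discrim]
    ring
  have hroot : (1 - ρ ^ 2) * (pPlus b c T ρ r * pPlus b c T ρ r) + -B * pPlus b c T ρ r + -N = 0 :=
    (quadratic_eq_zero_iff hlead.ne' hdiscrim _).2 <| .inl <| by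
      rw [pPlus, ← hB, ← hN, neg_neg, one_div_mul_eq_div]
  have hcB : c ^ 2 * B = c ^ 2 + 2 * ρ * b * c := by rw [hB]; field_simp
  have hcN : c ^ 2 * N = b ^ 2 + r ^ 2 / T ^ 2 := by
    rw [hN, mul_comm (c ^ 2) (T ^ 2), ← div_div]
    field_simp
  linear_combination c ^ 2 * hroot + pPlus b c T ρ r * hcB + hcN

namespace SteinStein

/-- The correlated Stein–Stein Hamiltonian system at time `t`, for constant momentum `p`; the
parameter `β` stands for the shifted drift `b̃ = b + ρcp`. -/
def SolvesHamiltonianAt (c ρ p β : ℝ) (y z q : ℝ → ℝ) (t : ℝ) : Prop :=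
  HasDerivAt y (z t ^ 2 * (p - 1 / 2) + ρ * c * z t * q t) t ∧
  HasDerivAt z (β * z t + c ^ 2 * q t) t ∧
  HasDerivAt q (p * z t * (1 - p) - β * q t) t

/-- The candidate `z`-component of the Hamiltonian flow, with frequency `χ` and initial
momentum `q₀`. -/
noncomputable def zFlow (c χ q₀ t : ℝ) : ℝ :=
  q₀ * c ^ 2 / χ * Real.sin (χ * t)

/-- The candidate `q`-component of the Hamiltonian flow, the momentum dual to `z`; `β` stands
for `b̃`. -/
noncomputable def qFlow (β χ q₀ t : ℝ) : ℝ :=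
  q₀ * (Real.cos (χ * t) - β / χ * Real.sin (χ * t))

/-- The candidate `y`-component of the Hamiltonian flow, driven by `zFlow` and `qFlow`; `β`
stands for `b̃`. -/
noncomputable def yFlow (c ρ p β χ q₀ t : ℝ) : ℝ :=
  q₀ ^ 2 * c ^ 2 / (8 * χ ^ 3) *
    ((c ^ 2 * (2 * p - 1) - 2 * ρ * c * β) * (2 * χ * t - Real.sin (2 * χ * t))
      + 2 * ρ * c * χ * (1 - Real.cos (2 * χ * t)))

variable {c ρ p β χ : ℝ} (q₀ t : ℝ)

theorem zFlow_zero : zFlow c χ q₀ 0 = 0 := by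
  simp [zFlow]

theorem qFlow_zero : qFlow β χ q₀ 0 = q₀ := by
  simp [qFlow]

theorem yFlow_zero : yFlow c ρ p β χ q₀ 0 = 0 := by
  simp [yFlow]

theorem hasDerivAt_zFlow (hχ : χ ≠ 0) :
    HasDerivAt (zFlow c χ q₀) (β * zFlow c χ q₀ t + c ^ 2 * qFlow β χ q₀ t) t := by
  have hlin : HasDerivAt (fun s => χ * s) χ t := hasDerivAt_const_mul χ
  refine (hlin.sin.const_mul (q₀ * c ^ 2 / χ)).congr_deriv ?_
  simp only [zFlow, qFlow]
  field_simp
  ring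

theorem hasDerivAt_qFlow (hχ : χ ≠ 0) (hquad : c ^ 2 * p * (p - 1) - β ^ 2 = χ ^ 2) :
    HasDerivAt (qFlow β χ q₀) (p * zFlow c χ q₀ t * (1 - p) - β * qFlow β χ q₀ t) t := by
  have hlin : HasDerivAt (fun s => χ * s) χ t := hasDerivAt_const_mul χ
  refine ((hlin.cos.sub (hlin.sin.const_mul (β / χ))).const_mul q₀).congr_deriv ?_
  simp only [zFlow, qFlow]
  field_simp
  linear_combination q₀ * Real.sin (χ * t) * hquad

theorem zFlow_sq :
    zFlow c χ q₀ t ^ 2 = q₀ ^ 2 * c ^ 4 / (2 * χ ^ 2) * (1 - Real.cos (2 * χ * t)) := by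
  rw [zFlow, mul_pow, Real.sin_sq_eq_half_sub, ← mul_assoc]
  ring

theorem zFlow_mul_qFlow :
    zFlow c χ q₀ t * qFlow β χ q₀ t
      = q₀ ^ 2 * c ^ 2 / (2 * χ) *
        (Real.sin (2 * χ * t) - β / χ * (1 - Real.cos (2 * χ * t))) := by
  rw [zFlow, qFlow, mul_assoc 2 χ t, Real.sin_two_mul, Real.cos_two_mul, Real.cos_sq']
  ring

theorem hasDerivAt_yFlow (hχ : χ ≠ 0) :
    HasDerivAt (yFlow c ρ p β χ q₀)
      (zFlow c χ q₀ t ^ 2 * (p - 1 / 2) + ρ * c * zFlow c χ q₀ t * qFlow β χ q₀ t) t := by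
  have hlin : HasDerivAt (fun s => 2 * χ * s) (2 * χ) t := hasDerivAt_const_mul (2 * χ)
  have hderiv := (((hlin.sub hlin.sin).const_mul (c ^ 2 * (2 * p - 1) - 2 * ρ * c * β)).add
    ((hlin.cos.const_sub 1).const_mul (2 * ρ * c * χ))).const_mul (q₀ ^ 2 * c ^ 2 / (8 * χ ^ 3))
  refine hderiv.congr_deriv ?_
  rw [mul_assoc (ρ * c), zFlow_sq, zFlow_mul_qFlow]
  field_simp
  ring

theorem solvesHamiltonianAt_flow (hχ : χ ≠ 0) (hquad : c ^ 2 * p * (p - 1) - β ^ 2 = χ ^ 2) :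
    SolvesHamiltonianAt c ρ p β (yFlow c ρ p β χ q₀) (zFlow c χ q₀) (qFlow β χ q₀) t :=
  ⟨hasDerivAt_yFlow q₀ t hχ, hasDerivAt_zFlow q₀ t hχ, hasDerivAt_qFlow q₀ t hχ hquad⟩

variable {t}

theorem qFlow_eq_zero (hχ : χ ≠ 0)
    (htrans : χ * Real.cos (χ * t) = β * Real.sin (χ * t)) : qFlow β χ q₀ t = 0 := by
  rw [qFlow, div_mul_eq_mul_div, ← htrans, mul_div_cancel_left₀ _ hχ, sub_self, mul_zero]

end SteinStein

open SteinStein in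
theorem stein_stein_correlated_bvp_sufficient_general
    {T c b ρ a r q₀ p btilde χ D : ℝ}
    (hT : T ≠ 0) (hc : c ≠ 0) (hr : r ≠ 0)
    (hquad : c ^ 2 * p * (p - 1) - (b + ρ * c * p) ^ 2 = r ^ 2 / T ^ 2)
    (hroot : r * Real.cos r = (b + ρ * c * p) * T * Real.sin r)
    (hbt : btilde = b + ρ * c * p)
    (hχ : χ = r / T)
    (hD : D = (c ^ 2 * (2 * p - 1) - 2 * ρ * c * btilde) * (2 * r - Real.sin (2 * r))
        + 2 * ρ * c * (r / T) * (1 - Real.cos (2 * r)))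
    (hD₀ : D ≠ 0)
    (hq₀ : q₀ ^ 2 = 8 * r ^ 3 * a / (c ^ 2 * T ^ 3 * D)) :
    (∀ t, SolvesHamiltonianAt c ρ p btilde
      (yFlow c ρ p btilde χ q₀) (zFlow c χ q₀) (qFlow btilde χ q₀) t) ∧
    yFlow c ρ p btilde χ q₀ 0 = 0 ∧
    zFlow c χ q₀ 0 = 0 ∧
    qFlow btilde χ q₀ 0 = q₀ ∧
    yFlow c ρ p btilde χ q₀ T = a ∧
    qFlow btilde χ q₀ T = 0 := by
  have hχ₀ : χ ≠ 0 := hχ ▸ div_ne_zero hr hT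
  have hχT : χ * T = r := by rw [hχ, div_mul_cancel₀ r hT]
  have hdet : c ^ 2 * p * (p - 1) - btilde ^ 2 = χ ^ 2 := by rw [hbt, hquad, hχ, div_pow]
  have htrans : χ * Real.cos (χ * T) = btilde * Real.sin (χ * T) := by
    rw [hχT, hχ, hbt, div_mul_eq_mul_div, hroot]
    field_simp
  have hyT : yFlow c ρ p btilde χ q₀ T = a := by
    rw [yFlow, mul_assoc 2 χ T, hχT, hχ, ← hD, hq₀]
    field_simp
  exact ⟨fun t => solvesHamiltonianAt_flow q₀ t hχ₀ hdet, yFlow_zero q₀, zFlow_zero q₀,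
    qFlow_zero q₀, hyT, qFlow_eq_zero q₀ hχ₀ htrans⟩

/-- Sufficiency: the explicit flow formulas built from a root `r` of the correlated
transversality equation solve the correlated Stein–Stein Hamiltonian boundary value
problem with the prescribed boundary conditions. -/
theorem stein_stein_correlated_bvp_sufficient
    (T c b ρ a r q₀ p btilde χ D : ℝ)
    (hT : 0 < T) (hc : 0 < c) (hb : b ≤ 0) (hρ : ρ ∈ Set.Ioc (-1 : ℝ) 0)
    (ha : 0 < a) (hr : 0 < r)
    (hp : p = pPlus b c T ρ r)
    (hroot : r * Real.cos r = (b + ρ * c * pPlus b c T ρ r) * T * Real.sin r)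
    (hbt : btilde = b + ρ * c * p)
    (hχ : χ = r / T)
    (hD : D = (c ^ 2 * (2 * p - 1) - 2 * ρ * c * btilde) * (2 * r - Real.sin (2 * r))
        + 2 * ρ * c * (r / T) * (1 - Real.cos (2 * r)))
    (hDpos : 0 < D)
    (hq₀ : q₀ ^ 2 = 8 * r ^ 3 * a / (c ^ 2 * T ^ 3 * D)) :
    (∀ t ∈ Set.Icc (0 : ℝ) T,
      HasDerivAt (fun s : ℝ => q₀ ^ 2 * c ^ 2 / (8 * χ ^ 3) *
          ((c ^ 2 * (2 * p - 1) - 2 * ρ * c * btilde) * (2 * χ * s - Real.sin (2 * χ * s))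
            + 2 * ρ * c * χ * (1 - Real.cos (2 * χ * s))))
        ((q₀ * c ^ 2 / χ * Real.sin (χ * t)) ^ 2 * (p - 1 / 2)
          + ρ * c * (q₀ * c ^ 2 / χ * Real.sin (χ * t))
            * (q₀ * (Real.cos (χ * t) - btilde / χ * Real.sin (χ * t)))) t ∧
      HasDerivAt (fun s : ℝ => q₀ * c ^ 2 / χ * Real.sin (χ * s))
        (btilde * (q₀ * c ^ 2 / χ * Real.sin (χ * t))
          + c ^ 2 * (q₀ * (Real.cos (χ * t) - btilde / χ * Real.sin (χ * t)))) t ∧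
      HasDerivAt (fun s : ℝ => q₀ * (Real.cos (χ * s) - btilde / χ * Real.sin (χ * s)))
        (p * (q₀ * c ^ 2 / χ * Real.sin (χ * t)) * (1 - p)
          - btilde * (q₀ * (Real.cos (χ * t) - btilde / χ * Real.sin (χ * t)))) t) ∧
    q₀ ^ 2 * c ^ 2 / (8 * χ ^ 3) *
        ((c ^ 2 * (2 * p - 1) - 2 * ρ * c * btilde) * (2 * χ * 0 - Real.sin (2 * χ * 0))
          + 2 * ρ * c * χ * (1 - Real.cos (2 * χ * 0))) = 0 ∧
    q₀ * c ^ 2 / χ * Real.sin (χ * 0) = 0 ∧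
    q₀ * (Real.cos (χ * 0) - btilde / χ * Real.sin (χ * 0)) = q₀ ∧
    q₀ ^ 2 * c ^ 2 / (8 * χ ^ 3) *
        ((c ^ 2 * (2 * p - 1) - 2 * ρ * c * btilde) * (2 * χ * T - Real.sin (2 * χ * T))
          + 2 * ρ * c * χ * (1 - Real.cos (2 * χ * T))) = a ∧
    q₀ * (Real.cos (χ * T) - btilde / χ * Real.sin (χ * T)) = 0 := by
  have hquad := pPlus_quadratic (b := b) (T := T) (r := r) hc.ne'
    (abs_lt.2 ⟨hρ.1, hρ.2.trans_lt one_pos⟩)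
  obtain ⟨hflow, hboundary⟩ := stein_stein_correlated_bvp_sufficient_general
    hT.ne' hc.ne' hr.ne' (hp ▸ hquad) (hp ▸ hroot) hbt hχ hD hDpos.ne' hq₀
  exact ⟨fun t _ => hflow t, hboundary⟩
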